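/- Let K be a number field, fix an embedding of K into the complex numbers, let f(z) = ∑_{n≥0} a_n z^n ∈ K[[z]], and let r be the radius of convergence of the complex series ∑ a_n z^n. (a) If r ∈ (1, ∞) and f does not admit the circle of radius r as a natural boundary, then there is a constant κ > 0 such that {n ∈ ℕ : h(a_n) ≥ κ·n} has positive upper density. (b) If r ∈ (0, 1) and f does not admit the circle of radius r as a natural boundary, then there is a constant κ′ > 0 such that {n ∈ ℕ : h(a_n) ≥ κ′·n} has positive upper density. -/

import Mathlib

/-! The heights only enter through two inequalities for `d = [K : ℚ]`: `|ι α| ≤ exp (d h(α))`, and, for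
`α ≠ 0`, the Liouville inequality `|ι α| ≥ exp (-d² h(α))` (`norm_embedding_le_exp_height`,
`exp_neg_height_le_norm_embedding`). Let `T` be the set of `n` with `h(aₙ) ≥ κ n` and suppose that it
has zero density. If `r < 1` and `κ` is small, the coefficients outside `T` form a series of radius
of convergence larger than `r`. If `r > 1`, then `aₙ` decays exponentially, so for small `κ` the
Liouville inequality forces `aₙ = 0` for all large `n` outside `T`. In both cases the circle is a
natural boundary by a version of Fabry's gap theorem, `hasNaturalBoundary_of_sparse`, which is the
main content of the file.

For Fabry's theorem, rescale so that `r = 2`, and suppose that `f` continues analytically across a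
point `2 e^{iθ₀}`. Disks of a fixed radius `x > 1` around the points `e^{iθ}`, with `θ` in a short
interval, then lie in the domain of the continuation, so Cauchy's estimate gives
`|∑ₙ cₙ C(n,m) e^{inθ}| ≤ M x⁻ᵐ` on that interval (`exists_arc_bound`). The terms with `n ≥ 32 m`
and those with `n ∉ T` are also `O(x⁻ᵐ)` in total after `x` is decreased, leaving `o(m)`
frequencies. Turán's lemma (`turan`) bounds each coefficient of an exponential sum with `N`
frequencies by `e^{O(N)}` times its supremum on the interval, hence `|cₖ| C(k,m) ≤ x^{-m/2}` up to
constants. With `m = ⌊k/2⌋` the binomial coefficient is at least `2ᵏ/(k+1)`, so the `cₖ` are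
exponentially smaller than `2⁻ᵏ`, contradicting the radius of convergence (`exists_coeff_bound`).

Turán's lemma is proved by annihilating all frequencies but one: subtracting a multiple of the
sum from its shift by `τ` kills the frequency `j` and multiplies the `k`-th coefficient by a factor
of modulus `2 |sin((k - j)τ/2)|`, where `τ` of order `1/N` is adapted to `k - j`.
-/

open Filter

/-- The upper density of a set of natural numbers. -/
noncomputable def upperDensity (S : Set ℕ) : ℝ :=
  Filter.limsup (fun n => ((S ∩ Set.Icc 1 n).ncard : ℝ) / n) Filter.atTop

/-- `S ⊆ ℕ` has positive upper density. -/
def HasPosUpperDensity (S : Set ℕ) : Prop := 0 < upperDensity S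

/-- `S ⊆ ℕ` has zero density. -/
def HasZeroDensity (S : Set ℕ) : Prop := upperDensity S = 0
open NumberField in
/-- The denominator ideal of `α ∈ K`: the ideal of `x ∈ 𝓞 K` with `x • α` integral. -/
noncomputable def denIdeal (K : Type*) [Field K] [NumberField K] (α : K) : Ideal (𝓞 K) :=
  (1 : Submodule (𝓞 K) K).colon (Submodule.span (𝓞 K) {α})

open NumberField in
/-- The absolute logarithmic Weil height of `α ∈ K`:
`h(α) = (log N(𝔡_α) + ∑_{σ : K →+* ℂ} log⁺ |σ α|) / [K:ℚ]`, which agrees with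
`∑_{w ∈ M_K} log max(|α|_w, 1)` for the standard normalized absolute values. -/
noncomputable def weilHeight (K : Type*) [Field K] [NumberField K] (α : K) : ℝ :=
  (Real.log (Ideal.absNorm (denIdeal K α)) +
    ∑ σ : K →+* ℂ, Real.log (max 1 ‖σ α‖)) / (Module.finrank ℚ K)
/-- The radius of convergence of the complex power series `∑ a_n z^n`. -/
noncomputable def seriesRadius (a : ℕ → ℂ) : ENNReal :=
  ⨆ (r : NNReal) (_ : ∃ C : ℝ, ∀ n, ‖a n‖ * (r : ℝ) ^ n ≤ C), (r : ENNReal)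
/-- The power series `∑ a_n z^n` (analytic on `D(0,r)`) admits the circle `|z| = r` as a
natural boundary: no point of the circle has an open neighborhood `U` together with a
function analytic on `D(0,r) ∪ U` agreeing with the series on `D(0,r)`. -/
def HasNaturalBoundary (a : ℕ → ℂ) (r : ℝ) : Prop :=
  ¬ ∃ (z₀ : ℂ) (U : Set ℂ) (g : ℂ → ℂ),
      ‖z₀‖ = r ∧ IsOpen U ∧ z₀ ∈ U ∧
      AnalyticOnNhd ℂ g (Metric.ball 0 r ∪ U) ∧
      Set.EqOn g (fun z => ∑' n, a n * z ^ n) (Metric.ball 0 r)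

/-! ### Heights and embeddings -/

/-- The embedded absolute value of `α` is bounded above by the height. -/
lemma norm_embedding_le_exp_height (K : Type*) [Field K] [NumberField K] (ι : K →+* ℂ) (α : K) :
    ‖ι α‖ ≤ Real.exp (Module.finrank ℚ K * weilHeight K α) := by
  have hd : (0 : ℝ) < Module.finrank ℚ K := by exact_mod_cast Module.finrank_pos
  have h1 : Module.finrank ℚ K * weilHeight K α = Real.log (Ideal.absNorm (denIdeal K α)) +
      ∑ σ : K →+* ℂ, Real.log (max 1 ‖σ α‖) := by
    unfold weilHeight; field_simp
  have h2 : Real.log (max 1 ‖ι α‖) ≤ ∑ σ : K →+* ℂ, Real.log (max 1 ‖σ α‖) :=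
    Finset.single_le_sum (f := fun σ : K →+* ℂ => Real.log (max 1 ‖σ α‖))
      (fun σ _ => Real.log_nonneg (le_max_left _ _)) (Finset.mem_univ ι)
  have h3 : 0 ≤ Real.log (Ideal.absNorm (denIdeal K α) : ℝ) := Real.log_natCast_nonneg _
  calc ‖ι α‖ ≤ max 1 ‖ι α‖ := le_max_right _ _
    _ = Real.exp (Real.log (max 1 ‖ι α‖)) :=
        (Real.exp_log (lt_of_lt_of_le one_pos (le_max_left _ _))).symm
    _ ≤ _ := Real.exp_le_exp.2 (by linarith)

open NumberField in
lemma absNorm_denIdeal_pos (K : Type*) [Field K] [NumberField K] (α : K) :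
    0 < Ideal.absNorm (denIdeal K α) := by
  rw [Nat.pos_iff_ne_zero, Ne, Ideal.absNorm_eq_zero_iff]
  intro h
  obtain ⟨⟨b, hb⟩, hx⟩ := IsLocalization.exists_integer_multiple (nonZeroDivisors (𝓞 K)) α
  have : b ∈ denIdeal K α := by
    unfold denIdeal
    rw [Submodule.mem_colon_span_singleton, Submodule.mem_one]
    obtain ⟨y, hy⟩ := hx
    exact ⟨y, hy⟩
  rw [h, Submodule.mem_bot] at this
  exact nonZeroDivisors.ne_zero hb this

open NumberField in
/-- A Liouville-type inequality: a nonzero algebraic number is bounded below by its height. With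
`D` the norm of the denominator ideal, `D α` is a nonzero algebraic integer, so its norm is
at least `1` in absolute value. -/
lemma exp_neg_height_le_norm_embedding (K : Type*) [Field K] [NumberField K] (ι : K →+* ℂ) (α : K)
    (hα : α ≠ 0) :
    Real.exp (-((Module.finrank ℚ K : ℝ) ^ 2 * weilHeight K α)) ≤ ‖ι α‖ := by
  classical
  have hd : (1 : ℝ) ≤ Module.finrank ℚ K := by exact_mod_cast Module.finrank_pos
  set d : ℝ := ((Module.finrank ℚ K : ℕ) : ℝ) with hdd
  set D := Ideal.absNorm (denIdeal K α) with hD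
  have hDpos : 0 < D := absNorm_denIdeal_pos K α
  have hDR : (1 : ℝ) ≤ D := by exact_mod_cast hDpos
  have hmem : (D : 𝓞 K) ∈ denIdeal K α := Ideal.absNorm_mem _
  unfold denIdeal at hmem
  rw [Submodule.mem_colon_span_singleton, Submodule.mem_one] at hmem
  obtain ⟨y, hy⟩ := hmem
  have hy' : (y : K) = D * α := by
    rw [Algebra.smul_def] at hy
    simpa using hy
  have hy0 : y ≠ 0 := by
    rintro rfl
    simp [hα, hDpos.ne'] at hy'
  have hnorm : (1 : ℝ) ≤ ∏ σ : K →+* ℂ, ‖σ (y : K)‖ := by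
    have e1 := Algebra.norm_eq_prod_embeddings ℚ ℂ (y : K)
    have e2 : ∏ σ : K →ₐ[ℚ] ℂ, σ (y : K) = ∏ σ : K →+* ℂ, σ (y : K) :=
      (Fintype.prod_equiv (RingHom.equivRatAlgHom K ℂ) _ _ (fun σ => rfl)).symm
    rw [← norm_prod, ← e2, ← e1, ← Algebra.coe_norm_int]
    have e3 : Algebra.norm ℤ y ≠ 0 := Algebra.norm_ne_zero_iff.2 hy0
    have e4 : (1 : ℝ) ≤ |((Algebra.norm ℤ y : ℤ) : ℝ)| := by
      exact_mod_cast Int.one_le_abs e3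
    simpa using e4
  have hle : ∏ σ : K →+* ℂ, ‖σ (y : K)‖ ≤
      (D : ℝ) ^ (Module.finrank ℚ K) * (‖ι α‖ * ∏ σ : K →+* ℂ, max 1 ‖σ α‖) := by
    have : ∀ σ : K →+* ℂ, ‖σ (y : K)‖ = D * ‖σ α‖ := by
      intro σ; rw [hy']; simp
    simp_rw [this]
    rw [Finset.prod_mul_distrib, Finset.prod_const, Finset.card_univ,
      NumberField.Embeddings.card]
    refine mul_le_mul_of_nonneg_left ?_ (by positivity)
    rw [← Finset.mul_prod_erase _ _ (Finset.mem_univ ι)]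
    refine mul_le_mul_of_nonneg_left ?_ (norm_nonneg _)
    calc ∏ σ ∈ Finset.univ.erase ι, ‖σ α‖ ≤ ∏ σ ∈ Finset.univ.erase ι, max 1 ‖σ α‖ :=
          Finset.prod_le_prod (fun _ _ => norm_nonneg _) (fun _ _ => le_max_right _ _)
      _ ≤ ∏ σ : K →+* ℂ, max 1 ‖σ α‖ := by
          rw [← Finset.mul_prod_erase Finset.univ (fun σ : K →+* ℂ => max 1 ‖σ α‖)
            (Finset.mem_univ ι)]
          exact le_mul_of_one_le_left
            (Finset.prod_nonneg fun _ _ => le_trans zero_le_one (le_max_left _ _))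
            (le_max_left _ _)
  have hια : 0 < ‖ι α‖ := by simpa using hα
  have hpos : ∀ σ : K →+* ℂ, (0 : ℝ) < max 1 ‖σ α‖ :=
    fun σ => lt_of_lt_of_le one_pos (le_max_left _ _)
  have hlog : 0 ≤ d * Real.log D + (Real.log ‖ι α‖ + ∑ σ : K →+* ℂ, Real.log (max 1 ‖σ α‖)) := by
    have := Real.log_nonneg (hnorm.trans hle)
    rw [Real.log_mul (by positivity)
      (mul_pos hια (Finset.prod_pos fun σ _ => hpos σ)).ne', Real.log_pow,
      Real.log_mul hια.ne' (Finset.prod_pos fun σ _ => hpos σ).ne',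
      Real.log_prod (fun σ _ => (hpos σ).ne')] at this
    exact this
  have h1 : d * weilHeight K α = Real.log D + ∑ σ : K →+* ℂ, Real.log (max 1 ‖σ α‖) := by
    unfold weilHeight; rw [← hdd]; field_simp; rfl
  have hS : 0 ≤ ∑ σ : K →+* ℂ, Real.log (max 1 ‖σ α‖) :=
    Finset.sum_nonneg fun σ _ => Real.log_nonneg (le_max_left _ _)
  have : -(d ^ 2 * weilHeight K α) ≤ Real.log ‖ι α‖ := by
    have : d ^ 2 * weilHeight K α =
      d * (Real.log D + ∑ σ : K →+* ℂ, Real.log (max 1 ‖σ α‖)) := by rw [← h1]; ring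
    rw [this]; nlinarith
  calc _ ≤ Real.exp (Real.log ‖ι α‖) := Real.exp_le_exp.2 this
    _ = _ := Real.exp_log hια

/-! ### Turán's lemma -/

lemma prod_max_one_div_le_exp {y : ℝ} (hy : 0 ≤ y) (D : ℕ) :
    ∏ d ∈ Finset.range D, max 1 (y / (d + 1)) ≤ Real.exp y := by
  induction D with
  | zero => simpa using hy
  | succ D ih =>
    by_cases h : y / (D + 1) ≤ 1
    · rw [Finset.prod_range_succ, max_eq_left h, mul_one]; exact ih
    · push Not at h
      have : ∀ d ∈ Finset.range (D + 1), max 1 (y / ((d : ℝ) + 1)) = y / ((d : ℝ) + 1) := by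
        intro d hd
        refine max_eq_right (h.le.trans ?_)
        have : (d : ℝ) ≤ D := by exact_mod_cast Nat.lt_succ_iff.1 (Finset.mem_range.1 hd)
        gcongr
      rw [Finset.prod_congr rfl this, Finset.prod_div_distrib, Finset.prod_const,
        Finset.card_range]
      have h2 : ∏ d ∈ Finset.range (D + 1), ((d : ℝ) + 1) = (D + 1).factorial := by
        rw [← Finset.prod_range_add_one_eq_factorial]; push_cast; rfl
      rw [h2]
      exact Real.pow_div_factorial_le_exp y hy _

lemma prod_max_one_div_dist_le_exp {y : ℝ} (hy : 0 ≤ y) (k : ℕ) (S : Finset ℕ) (hk : k ∉ S) :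
    ∏ j ∈ S, max 1 (y / |(k : ℝ) - j|) ≤ Real.exp (2 * y) := by
  classical
  -- The integers below `k` and those above `k` each have pairwise distinct distances to `k`.
  have key : ∀ (R : Finset ℕ) (e : ℕ → ℕ), Set.InjOn e R →
      (∀ j ∈ R, |(k : ℝ) - j| = e j + 1) →
      ∏ j ∈ R, max 1 (y / |(k : ℝ) - j|) ≤ Real.exp y := by
    intro R e he hR
    have h1 : ∏ j ∈ R, max 1 (y / |(k : ℝ) - j|) = ∏ d ∈ R.image e, max 1 (y / ((d : ℝ) + 1)) := by
      rw [Finset.prod_image he]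
      exact Finset.prod_congr rfl fun j hj => by rw [hR j hj]
    obtain ⟨D, hD⟩ := (R.image e).exists_nat_subset_range
    rw [h1]
    refine le_trans ?_ (prod_max_one_div_le_exp hy D)
    rw [← Finset.prod_sdiff hD]
    refine le_mul_of_one_le_left
      (Finset.prod_nonneg fun _ _ => le_trans zero_le_one (le_max_left _ _)) ?_
    exact Finset.one_le_prod fun _ _ => le_max_left _ _
  rw [← Finset.prod_filter_mul_prod_filter_not S (fun j => j < k), two_mul, Real.exp_add]
  refine mul_le_mul (key _ (fun j => k - 1 - j) ?_ ?_) (key _ (fun j => j - k - 1) ?_ ?_)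
    (Finset.prod_nonneg fun _ _ => le_trans zero_le_one (le_max_left _ _)) (Real.exp_pos _).le
  · intro a ha b hb hab
    simp only [Finset.coe_filter, Set.mem_ofPred_eq] at ha hb hab
    have h1 : a < k := ha.2
    have h2 : b < k := hb.2
    omega
  · intro j hj
    simp at hj
    have : (((k - 1 - j : ℕ) : ℝ)) = k - 1 - j := by
      rw [Nat.cast_sub (by omega), Nat.cast_sub (by omega)]; simp
    rw [this, abs_of_pos (by rw [sub_pos]; exact_mod_cast hj.2)]
    ring
  · intro a ha b hb hab
    simp only [Finset.coe_filter, Set.mem_ofPred_eq] at ha hb hab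
    have h1 : ¬ a < k := ha.2
    have h2 : ¬ b < k := hb.2
    have h3 : a ≠ k := fun h : a = k => hk (h ▸ ha.1)
    have h4 : b ≠ k := fun h : b = k => hk (h ▸ hb.1)
    omega
  · intro j hj
    simp at hj
    have hne : j ≠ k := fun h : j = k => hk (h ▸ hj.1)
    have : (((j - k - 1 : ℕ) : ℝ)) = j - k - 1 := by
      rw [Nat.cast_sub (by omega), Nat.cast_sub (by omega)]; simp
    rw [this, abs_of_nonpos (by rw [sub_nonpos]; exact_mod_cast hj.2)]
    ring

/-- For distinct `k, j` some time shift `τ ≤ η` separates the frequencies `k` and `j`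
quantitatively. If `η |k - j| ≥ π` the shift is chosen to make the two phases opposite. -/
lemma exists_shift (k j : ℕ) (hkj : k ≠ j) {η : ℝ} (hη : 0 < η) :
    ∃ τ, 0 ≤ τ ∧ τ ≤ η ∧
      2 * (max 1 ((Real.pi / η) / |(k : ℝ) - j|))⁻¹ ≤
        ‖Complex.exp (Complex.I * (k * τ)) - Complex.exp (Complex.I * (j * τ))‖ := by
  have hpi := Real.pi_pos
  set d := |(k : ℝ) - j| with hd
  have hdpos : 0 < d := by
    rw [hd, abs_pos, sub_ne_zero]; exact_mod_cast hkj
  have hnorm : ∀ τ : ℝ, 0 ≤ τ → d * τ ≤ Real.pi → 2 * (2 / Real.pi * (d * τ / 2)) ≤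
      ‖Complex.exp (Complex.I * (k * τ)) - Complex.exp (Complex.I * (j * τ))‖ := by
    intro τ hτ hdτ
    have e1 : Complex.exp (Complex.I * (k * τ)) - Complex.exp (Complex.I * (j * τ)) =
        Complex.exp (Complex.I * ((j * τ : ℝ) : ℂ)) *
          (Complex.exp (Complex.I * ((((k : ℝ) - j) * τ : ℝ) : ℂ)) - 1) := by
      rw [mul_sub, ← Complex.exp_add, mul_one]
      push_cast
      congr 2
      ring
    rw [e1, norm_mul, Complex.norm_exp_I_mul_ofReal, one_mul,
      Complex.norm_exp_I_mul_ofReal_sub_one, norm_mul]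
    have e2 : ‖Real.sin (((k : ℝ) - j) * τ / 2)‖ = ‖Real.sin (d * τ / 2)‖ := by
      rcases abs_choice ((k : ℝ) - j) with h | h
      · rw [hd, h]
      · rw [hd, h, show -((k : ℝ) - j) * τ / 2 = -(((k : ℝ) - j) * τ / 2) by ring, Real.sin_neg,
          norm_neg]
    rw [e2]
    have := Real.mul_le_sin (x := d * τ / 2) (by positivity) (by linarith)
    simp only [Real.norm_eq_abs, Nat.abs_ofNat]
    have h3 := le_abs_self (Real.sin (d * τ / 2))
    linarith
  by_cases h : d * η ≤ Real.pi
  · refine ⟨η, hη.le, le_rfl, le_trans (le_of_eq ?_) (hnorm η hη.le h)⟩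
    rw [max_eq_right]
    · field_simp
    · rw [div_div, one_le_div (by positivity)]; linarith
  · push Not at h
    refine ⟨Real.pi / d, by positivity, ?_, le_trans (le_of_eq ?_)
      (hnorm (Real.pi / d) (by positivity) (le_of_eq (by field_simp)))⟩
    · rw [div_le_iff₀ hdpos]; linarith
    · rw [max_eq_left]
      · field_simp
      · rw [div_div, div_le_one (by positivity)]; linarith

/-- The induction behind Turán's lemma: shifting by the `τ` of `exists_shift` and subtracting kills
the frequency `j`, at most doubles the bound, and shortens the interval by at most `η`. -/
lemma turan_aux (k : ℕ) (θ₀ η : ℝ) (hη : 0 < η) (S : Finset ℕ) : k ∉ S → ∀ (b : ℕ → ℂ) (B : ℝ),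
    (∀ θ ∈ Set.Icc θ₀ (θ₀ + η * S.card),
      ‖∑ n ∈ insert k S, b n * Complex.exp (Complex.I * (n * (θ : ℝ)))‖ ≤ B) →
    ‖b k‖ ≤ B * ∏ j ∈ S, max 1 ((Real.pi / η) / |(k : ℝ) - j|) := by
  classical
  induction S using Finset.induction_on with
  | empty =>
    intro _ b B h
    have := h θ₀ (by simp)
    simpa [norm_mul, Complex.norm_exp] using this
  | insert j S hj ih =>
    intro hk b B h
    simp only [Finset.mem_insert, not_or] at hk
    obtain ⟨τ, hτ0, hτη, hτ⟩ := exists_shift k j hk.1 hη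
    set b' : ℕ → ℂ := fun n =>
      b n * (Complex.exp (Complex.I * (n * τ)) - Complex.exp (Complex.I * (j * τ))) with hb'
    have hcard : ((insert j S).card : ℝ) = S.card + 1 := by
      rw [Finset.card_insert_of_notMem hj]; push_cast; rfl
    have step : ∀ θ ∈ Set.Icc θ₀ (θ₀ + η * S.card),
        ‖∑ n ∈ insert k S, b' n * Complex.exp (Complex.I * (n * (θ : ℝ)))‖ ≤ 2 * B := by
      intro θ hθ
      have h1 := h (θ + τ) (by rw [hcard]; constructor <;> nlinarith [hθ.1, hθ.2])
      have h2 := h θ (by rw [hcard]; constructor <;> nlinarith [hθ.1, hθ.2])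
      have e : ∑ n ∈ insert k S, b' n * Complex.exp (Complex.I * (n * (θ : ℝ))) =
          (∑ n ∈ insert k (insert j S), b n * Complex.exp (Complex.I * (n * ((θ + τ : ℝ) : ℝ)))) -
          Complex.exp (Complex.I * ((j * τ : ℝ) : ℂ)) *
          ∑ n ∈ insert k (insert j S), b n * Complex.exp (Complex.I * (n * (θ : ℝ))) := by
        rw [Finset.mul_sum, ← Finset.sum_sub_distrib, Finset.insert_comm,
          Finset.sum_insert (a := j) (by simp [hj, Ne.symm hk.1])]
        have z : ∀ n : ℕ, b n * Complex.exp (Complex.I * (n * ((θ + τ : ℝ) : ℂ))) -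
            Complex.exp (Complex.I * ((j * τ : ℝ) : ℂ)) *
              (b n * Complex.exp (Complex.I * (n * (θ : ℝ)))) =
            b' n * Complex.exp (Complex.I * (n * (θ : ℝ))) := by
          intro n
          have : Complex.exp (Complex.I * (n * ((θ + τ : ℝ) : ℂ))) =
            Complex.exp (Complex.I * (n * τ)) * Complex.exp (Complex.I * (n * θ)) := by
            rw [← Complex.exp_add]; push_cast; congr 1; ring
          rw [this, hb']; push_cast; ring
        simp_rw [z]
        simp [hb']
      rw [e]
      refine (norm_sub_le _ _).trans ?_
      rw [norm_mul, Complex.norm_exp_I_mul_ofReal, one_mul]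
      linarith
    have h3 := ih hk.2 b' (2 * B) step
    rw [hb', norm_mul] at h3
    have hM : 0 < max 1 ((Real.pi / η) / |(k : ℝ) - j|) := lt_of_lt_of_le one_pos (le_max_left _ _)
    set M := max 1 ((Real.pi / η) / |(k : ℝ) - j|)
    have h4 : ‖b k‖ * (2 * M⁻¹) ≤ 2 * B * ∏ j ∈ S, max 1 ((Real.pi / η) / |(k : ℝ) - j|) :=
      (mul_le_mul_of_nonneg_left hτ (norm_nonneg _)).trans h3
    rw [Finset.prod_insert hj]
    change _ ≤ B * (M * _)
    have h5 := mul_le_mul_of_nonneg_right h4 hM.le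
    have h6 : ‖b k‖ * (2 * M⁻¹) * M = 2 * ‖b k‖ := by field_simp
    rw [h6] at h5
    linarith

/-- **Turán's lemma**, for coefficients: a coefficient of an exponential sum is controlled by the
supremum on any interval, up to a factor exponential in the number of frequencies. The factor does
not depend on the size of the frequencies. -/
lemma turan (k : ℕ) (θ₀ δ : ℝ) (hδ : 0 < δ) (S : Finset ℕ) (hk : k ∈ S) (b : ℕ → ℂ) (B : ℝ)
    (h : ∀ θ ∈ Set.Icc θ₀ (θ₀ + δ),
      ‖∑ n ∈ S, b n * Complex.exp (Complex.I * (n * (θ : ℝ)))‖ ≤ B) :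
    ‖b k‖ ≤ B * Real.exp (2 * Real.pi / δ * (S.card + 1)) := by
  classical
  have hB : 0 ≤ B := (norm_nonneg _).trans (h θ₀ ⟨le_rfl, by linarith⟩)
  set η := δ / (S.card + 1) with hη
  have hηpos : 0 < η := by positivity
  have hc : ((S.erase k).card : ℝ) ≤ S.card + 1 := by
    have := Finset.card_erase_le (s := S) (a := k)
    have : ((S.erase k).card : ℝ) ≤ S.card := by exact_mod_cast this
    linarith
  have hηc : η * (S.erase k).card ≤ δ := by
    calc η * (S.erase k).card ≤ η * (S.card + 1) := by gcongr
      _ = δ := by rw [hη]; field_simp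
  have h1 := turan_aux k θ₀ η hηpos (S.erase k) (by simp) b B (by
    intro θ hθ
    rw [Finset.insert_erase hk]
    exact h θ ⟨hθ.1, hθ.2.trans (by linarith)⟩)
  refine h1.trans (mul_le_mul_of_nonneg_left ?_ hB)
  refine (prod_max_one_div_dist_le_exp (y := Real.pi / η) (by positivity) k _ (by simp)).trans
    (le_of_eq ?_)
  congr 1
  rw [hη]; field_simp

/-! ### Cauchy estimates for the continued power series -/

lemma choose_mul_pow_le (n m : ℕ) {x : ℝ} (hx : 0 ≤ x) : (n.choose m : ℝ) * x ^ m ≤ (1 + x) ^ n := by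
  by_cases h : m ≤ n
  · rw [add_comm, add_pow]
    have := Finset.single_le_sum (f := fun i => x ^ i * 1 ^ (n - i) * (n.choose i : ℝ))
      (fun i _ => by positivity) (Finset.mem_range.2 (Nat.lt_succ_of_le h))
    simp only [one_pow, mul_one] at this ⊢
    linarith
  · rw [Nat.choose_eq_zero_of_lt (by omega)]
    simp; positivity

/-- A coefficient bound `C q⁻ⁿ` gives a bound on the binomially weighted coefficients, for any value
of the auxiliary parameter `x`. -/
lemma norm_mul_choose_le {a : ℂ} {C q x : ℝ} (n m : ℕ) (hC : 0 ≤ C) (hq : 0 < q) (hx : 0 < x)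
    (ha : ‖a‖ * q ^ n ≤ C) :
    ‖a‖ * (n.choose m : ℝ) ≤ C * ((1 + x) / q) ^ n * (x ^ m)⁻¹ := by
  have h1 : ‖a‖ ≤ C / q ^ n := by rwa [le_div_iff₀ (by positivity)]
  have h2 : (n.choose m : ℝ) ≤ (1 + x) ^ n / x ^ m := by
    rw [le_div_iff₀ (by positivity)]; exact choose_mul_pow_le n m hx.le
  calc ‖a‖ * (n.choose m : ℝ) ≤ (C / q ^ n) * ((1 + x) ^ n / x ^ m) := by gcongr
    _ = _ := by rw [div_pow]; field_simp

lemma summable_norm_mul_choose (c : ℕ → ℂ) {C : ℝ} (hc : ∀ n, ‖c n‖ * (3 / 2) ^ n ≤ C) (m : ℕ) :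
    Summable fun n => ‖c n‖ * (n.choose m : ℝ) := by
  have hC : 0 ≤ C := le_trans (by positivity) (hc 0)
  refine Summable.of_nonneg_of_le (fun n => by positivity)
    (fun n => norm_mul_choose_le (x := 1 / 4) n m hC (by norm_num) (by norm_num) (hc n)) ?_
  exact ((summable_geometric_of_lt_one (by norm_num) (by norm_num)).mul_left C).mul_right _

lemma iteratedDeriv_powerSeries (c : ℕ → ℂ) {C : ℝ} (hc : ∀ n, ‖c n‖ * (3 / 2) ^ n ≤ C)
    (g : ℂ → ℂ) (hg : Set.EqOn g (fun z => ∑' n, c n * z ^ n) (Metric.ball 0 2)) (m : ℕ)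
    (u : ℂ) (hu : ‖u‖ = 1) :
    iteratedDeriv m g u = m.factorial * ∑' n, c n * (n.choose m : ℂ) * u ^ (n - m) := by
  have hC : 0 ≤ C := le_trans (by positivity) (hc 0)
  set V : Set ℂ := Metric.ball 0 (5 / 4)
  set F : ℕ → ℂ → ℂ := fun N z => ∑ n ∈ Finset.range N, c n * z ^ n
  have hF : ∀ N, ContDiff ℂ ⊤ (F N) := fun N => by fun_prop
  have h0 : TendstoLocallyUniformlyOn F g atTop V := by
    have hsum : Summable fun n : ℕ => C * (5 / 6 : ℝ) ^ n :=
      (summable_geometric_of_lt_one (by norm_num) (by norm_num)).mul_left C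
    have := tendstoUniformlyOn_tsum_nat (f := fun n z => c n * z ^ n) hsum (s := V) (by
      intro n z hz
      have hz' : ‖z‖ ≤ 5 / 4 := by
        have : z ∈ Metric.ball (0 : ℂ) (5 / 4) := hz
        rw [mem_ball_zero_iff] at this
        exact this.le
      rw [norm_mul, norm_pow]
      calc ‖c n‖ * ‖z‖ ^ n ≤ ‖c n‖ * (5 / 4) ^ n := by gcongr
        _ = ‖c n‖ * (3 / 2) ^ n * (5 / 6) ^ n := by rw [mul_assoc, ← mul_pow]; norm_num
        _ ≤ C * (5 / 6) ^ n := by gcongr; exact hc n)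
    refine (this.congr_right ?_).tendstoLocallyUniformlyOn
    exact fun z hz => (hg (Metric.ball_subset_ball (by norm_num) hz)).symm
  have hm : ∀ m, TendstoLocallyUniformlyOn (fun N => iteratedDeriv m (F N)) (iteratedDeriv m g)
      atTop V := by
    intro m
    induction m with
    | zero => simpa [iteratedDeriv_zero] using h0
    | succ m ih =>
      have := ih.deriv (Eventually.of_forall fun N =>
        ((hF N).differentiable_iteratedDeriv m (by exact_mod_cast WithTop.coe_lt_top _)).differentiableOn)
        Metric.isOpen_ball
      simp only [iteratedDeriv_succ]
      exact this
  have huV : u ∈ V := by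
    change u ∈ Metric.ball (0 : ℂ) (5 / 4)
    rw [mem_ball_zero_iff, hu]; norm_num
  have hlim := (hm m).tendsto_at huV
  have hterm : ∀ N, iteratedDeriv m (F N) u =
      ∑ n ∈ Finset.range N, m.factorial * (c n * (n.choose m : ℂ) * u ^ (n - m)) := by
    intro N
    change iteratedDeriv m (fun z => ∑ n ∈ Finset.range N, c n * z ^ n) u = _
    rw [iteratedDeriv_fun_sum (fun i _ => by fun_prop)]
    refine Finset.sum_congr rfl fun n _ => ?_
    rw [iteratedDeriv_const_mul_field, iteratedDeriv_pow, Nat.descFactorial_eq_factorial_mul_choose]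
    push_cast; ring
  simp_rw [hterm] at hlim
  rw [← tsum_mul_left]
  have hs : Summable fun n => (m.factorial : ℂ) * (c n * (n.choose m : ℂ) * u ^ (n - m)) := by
    refine Summable.mul_left _ (Summable.of_norm ?_)
    simpa [hu] using summable_norm_mul_choose c hc m
  exact tendsto_nhds_unique hlim hs.hasSum.tendsto_sum_nat

/-- If the power series extends analytically across the point `z₀` of the circle of radius `2`, then
the disks of some radius `x > 1` centred at the points of an arc of the unit circle around `z₀ / 2`
lie in the domain of the extension. Cauchy's estimates there improve on the trivial ones. -/
lemma exists_arc_bound (c : ℕ → ℂ) {C : ℝ} (hc : ∀ n, ‖c n‖ * (3 / 2) ^ n ≤ C) (z₀ : ℂ)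
    (U : Set ℂ) (g : ℂ → ℂ) (hz₀ : ‖z₀‖ = 2) (hU : IsOpen U) (hzU : z₀ ∈ U)
    (hgan : AnalyticOnNhd ℂ g (Metric.ball 0 2 ∪ U))
    (hg : Set.EqOn g (fun z => ∑' n, c n * z ^ n) (Metric.ball 0 2)) :
    ∃ θ₀ δ x M : ℝ, 0 < δ ∧ 1 < x ∧ ∀ (m : ℕ), ∀ θ ∈ Set.Icc θ₀ (θ₀ + δ),
      ‖∑' n : ℕ, c n * (n.choose m : ℂ) * Complex.exp (Complex.I * (n * (θ : ℝ)))‖ ≤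
        M * (x ^ m)⁻¹ := by
  set u₀ : ℂ := z₀ / 2 with hu₀
  have hsub : Metric.closedBall u₀ 1 ⊆ Metric.ball 0 2 ∪ U := by
    intro w hw
    by_cases hw2 : ‖w‖ < 2
    · left; simpa using hw2
    · right
      push Not at hw2
      rw [Metric.mem_closedBall, dist_eq_norm] at hw
      -- The disk touches the circle of radius `2` at `z₀` only.
      have : w = z₀ := by
        have e1 : ‖w - u₀‖ ^ 2 ≤ 1 := by nlinarith [norm_nonneg (w - u₀)]
        have e2 : 4 ≤ ‖w‖ ^ 2 := by nlinarith
        have e3 : ‖z₀‖ ^ 2 = 4 := by rw [hz₀]; norm_num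
        rw [Complex.sq_norm, Complex.normSq_apply] at e1 e2 e3
        have e4 : u₀.re = z₀.re / 2 := by simp [hu₀]
        have e5 : u₀.im = z₀.im / 2 := by simp [hu₀]
        simp only [Complex.sub_re, Complex.sub_im, e4, e5] at e1
        have e6 : (w.re - z₀.re) ^ 2 + (w.im - z₀.im) ^ 2 ≤ 0 := by nlinarith
        have e7 : w.re - z₀.re = 0 := by nlinarith [sq_nonneg (w.re - z₀.re), sq_nonneg (w.im - z₀.im)]
        have e8 : w.im - z₀.im = 0 := by nlinarith [sq_nonneg (w.re - z₀.re), sq_nonneg (w.im - z₀.im)]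
        exact Complex.ext (by linarith) (by linarith)
      rwa [this]
  obtain ⟨η, hη, hηsub⟩ := (isCompact_closedBall u₀ 1).exists_cthickening_subset_open
    (Metric.isOpen_ball.union hU) hsub
  rw [cthickening_closedBall hη.le zero_le_one] at hηsub
  obtain ⟨M, hM⟩ := (isCompact_closedBall u₀ (η + 1)).exists_bound_of_continuousOn
    (hgan.continuousOn.mono hηsub)
  have hu₀n : ‖u₀‖ = 1 := by rw [hu₀, norm_div, hz₀]; norm_num
  set θ₀ := Complex.arg u₀
  have hexp0 : Complex.exp (Complex.I * θ₀) = u₀ := by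
    have := Complex.norm_mul_exp_arg_mul_I u₀
    rw [hu₀n] at this
    rw [mul_comm]; simpa using this
  refine ⟨θ₀, η / 2, 1 + η / 2, M, by positivity, by linarith, ?_⟩
  intro m θ hθ
  set u := Complex.exp (Complex.I * (θ : ℝ)) with hu
  have hun : ‖u‖ = 1 := Complex.norm_exp_I_mul_ofReal θ
  have hdist : dist u u₀ ≤ η / 2 := by
    have : u - u₀ = u₀ * (Complex.exp (Complex.I * ((θ - θ₀ : ℝ) : ℂ)) - 1) := by
      rw [← hexp0, mul_sub, ← Complex.exp_add, mul_one, hu]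
      push_cast; congr 2; ring
    rw [dist_eq_norm, this, norm_mul, hu₀n, one_mul]
    refine Real.norm_exp_I_mul_ofReal_sub_one_le.trans ?_
    rw [Real.norm_eq_abs, abs_of_nonneg (by linarith [hθ.1])]
    linarith [hθ.2]
  have hball : Metric.closedBall u (1 + η / 2) ⊆ Metric.closedBall u₀ (η + 1) :=
    Metric.closedBall_subset_closedBall' (by linarith)
  have hcau := Complex.norm_iteratedDeriv_le_of_forall_mem_sphere_norm_le (f := g) (c := u)
    (R := 1 + η / 2) (C := M) m (by positivity)
    ((hgan.differentiableOn.mono (hball.trans hηsub)).diffContOnCl_ball subset_rfl)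
    (fun z hz => hM z (hball (Metric.sphere_subset_closedBall hz)))
  rw [iteratedDeriv_powerSeries c hc g hg m u hun, norm_mul, Complex.norm_natCast, mul_div_assoc]
    at hcau
  have hfac : (0 : ℝ) < m.factorial := by exact_mod_cast m.factorial_pos
  have h1 := le_of_mul_le_mul_left hcau hfac
  have h2 : ∑' n : ℕ, c n * (n.choose m : ℂ) * Complex.exp (Complex.I * (n * (θ : ℝ))) =
      u ^ m * ∑' n, c n * (n.choose m : ℂ) * u ^ (n - m) := by
    rw [← tsum_mul_left]
    refine tsum_congr fun n => ?_
    by_cases h : m ≤ n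
    · have : Complex.exp (Complex.I * (n * (θ : ℝ))) = u ^ m * u ^ (n - m) := by
        rw [← pow_add, Nat.add_sub_cancel' h, hu, ← Complex.exp_nat_mul]; congr 1; ring
      rw [this]; ring
    · rw [Nat.choose_eq_zero_of_lt (by omega)]; simp
  rw [h2, norm_mul, norm_pow, hun, one_pow, one_mul, ← div_eq_mul_inv]
  exact h1

/-! ### Fabry's gap theorem -/

lemma exists_forall_le_of_eventually {u : ℕ → ℝ} {C : ℝ} (h : ∀ᶠ n in atTop, u n ≤ C) :
    ∃ C', ∀ n, u n ≤ C' := by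
  obtain ⟨C', hC'⟩ := Filter.IsBoundedUnder.bddAbove_range (f := u) ⟨C, by simpa using h⟩
  exact ⟨C', fun n => hC' ⟨n, rfl⟩⟩

lemma two_pow_le_mul_choose_half (k : ℕ) : (2 : ℝ) ^ k ≤ (k + 1) * (k.choose (k / 2) : ℝ) := by
  have h1 : 2 ^ k ≤ (k + 1) * k.choose (k / 2) := by
    rw [← Nat.sum_range_choose]
    calc ∑ i ∈ Finset.range (k + 1), k.choose i
        ≤ ∑ _i ∈ Finset.range (k + 1), k.choose (k / 2) :=
          Finset.sum_le_sum fun i _ => Nat.choose_le_middle i k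
      _ = _ := by simp
  exact_mod_cast h1

/-- Off the frequencies `n ∈ T`, `n < 32 m`, the binomially weighted coefficients are dominated by
`x⁻ᵐ` times a fixed convergent geometric series. The ratio `11 / 12` serves the tail `n ≥ 32 m`, the
ratio `(1 + x) / q` the frequencies outside `T`. -/
lemma norm_mul_choose_le_of_not_mem (c : ℕ → ℂ) (T : Set ℕ) {C q x : ℝ}
    (hc : ∀ n, ‖c n‖ * (3 / 2) ^ n ≤ C) (hq : 2 < q) (hcT : ∀ n ∉ T, ‖c n‖ * q ^ n ≤ C)
    (hx : 1 < x) (hx2 : x ≤ 2) (n m : ℕ) (hn : ¬ (n < 32 * m ∧ n ∈ T)) :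
    ‖c n‖ * (n.choose m : ℝ) ≤ C * (max (11 / 12) ((1 + x) / q)) ^ n * (x ^ m)⁻¹ := by
  have hC : 0 ≤ C := le_trans (by positivity) (hc 0)
  have hx0 : 0 < x := by linarith
  by_cases hT : n ∈ T
  · have hnm : 32 * m ≤ n := by
      by_contra h
      exact hn ⟨by omega, hT⟩
    refine (norm_mul_choose_le (x := 1 / 4) n m hC (by norm_num) (by norm_num) (hc n)).trans ?_
    rw [mul_assoc, mul_assoc]
    refine mul_le_mul_of_nonneg_left ?_ hC
    have h1 : (((1 : ℝ) + 1 / 4) / (3 / 2)) ^ n ≤ (11 / 12) ^ n * (1 / 8) ^ m := by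
      calc (((1 : ℝ) + 1 / 4) / (3 / 2)) ^ n ≤ ((11 / 12) * (11 / 12)) ^ n := by gcongr; norm_num
        _ = (11 / 12) ^ n * (11 / 12) ^ n := mul_pow _ _ _
        _ ≤ (11 / 12) ^ n * (11 / 12) ^ (32 * m) := by
          refine mul_le_mul_of_nonneg_left ?_ (by positivity)
          exact pow_le_pow_of_le_one (by norm_num) (by norm_num) hnm
        _ ≤ _ := by rw [pow_mul]; gcongr; norm_num
    calc (((1 : ℝ) + 1 / 4) / (3 / 2)) ^ n * ((1 / 4) ^ m)⁻¹
        ≤ ((11 / 12) ^ n * (1 / 8) ^ m) * ((1 / 4) ^ m)⁻¹ := by gcongr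
      _ = (11 / 12) ^ n * (2⁻¹) ^ m := by
        rw [mul_assoc, ← inv_pow, ← mul_pow]; norm_num
      _ ≤ _ := by
        rw [← inv_pow]
        gcongr
        exact le_max_left _ _
  · refine (norm_mul_choose_le (x := x) n m hC (by linarith) hx0 (hcT n hT)).trans ?_
    gcongr
    exact le_max_right _ _

/-- The coefficient form of Fabry's theorem, on the circle of radius `2`. Coefficients off the sparse
set `T` are already small. Turán's lemma applied to the frequencies `n ∈ T`, `n < 32 m`, of
which there are `o(m)`, transfers the Cauchy estimate on the arc to the individual coefficients, and
`m = k / 2` makes the binomial weight of `c k` nearly `2 ^ k`. -/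
lemma exists_coeff_bound (c : ℕ → ℂ) (T : Set ℕ)
    (hT : ∀ ε : ℝ, 0 < ε → ∀ᶠ n : ℕ in atTop, ((T ∩ Set.Icc 1 n).ncard : ℝ) ≤ ε * n)
    {C q : ℝ} (hc : ∀ n, ‖c n‖ * (3 / 2) ^ n ≤ C) (hq : 2 < q)
    (hcT : ∀ n ∉ T, ‖c n‖ * q ^ n ≤ C) {θ₀ δ x₁ M : ℝ} (hδ : 0 < δ) (hx₁ : 1 < x₁)
    (h : ∀ (m : ℕ), ∀ θ ∈ Set.Icc θ₀ (θ₀ + δ),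
      ‖∑' n : ℕ, c n * (n.choose m : ℂ) * Complex.exp (Complex.I * (n * (θ : ℝ)))‖ ≤
        M * (x₁ ^ m)⁻¹) :
    ∃ y C' : ℝ, 2 < y ∧ ∀ n, ‖c n‖ * y ^ n ≤ C' := by
  classical
  have hC : 0 ≤ C := le_trans (by positivity) (hc 0)
  have hpi := Real.pi_pos
  have hM : 0 ≤ M := by
    have := (norm_nonneg _).trans (h 0 θ₀ ⟨le_rfl, by linarith⟩)
    simpa using this
  obtain ⟨x, hx, hxx₁, hx2, hxq⟩ : ∃ x : ℝ, 1 < x ∧ x ≤ x₁ ∧ x ≤ 2 ∧ 1 + x < q := by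
    refine ⟨min x₁ (min 2 (q / 2)), ?_, min_le_left _ _,
      (min_le_right _ _).trans (min_le_left _ _), ?_⟩
    · refine lt_min hx₁ (lt_min (by norm_num) (by linarith))
    · have := (min_le_right x₁ (min 2 (q / 2))).trans (min_le_right _ _)
      linarith
  have hx0 : 0 < x := by linarith
  set t := max (11 / 12) ((1 + x) / q) with ht
  have ht0 : 0 ≤ t := le_trans (by norm_num) (le_max_left _ _)
  have ht1 : t < 1 := max_lt (by norm_num) ((div_lt_one (by linarith)).2 hxq)
  set M' := M + C * (1 - t)⁻¹ with hM'
  have hM'0 : 0 ≤ M' := by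
    have : 0 ≤ (1 - t)⁻¹ := inv_nonneg.2 (by linarith)
    positivity
  set S : ℕ → Finset ℕ := fun m => (Finset.range (32 * m)).filter (· ∈ T) with hS
  have hSmem : ∀ m n, n ∈ S m ↔ (n < 32 * m ∧ n ∈ T) := fun m n => by simp [hS]
  have harc : ∀ m : ℕ, ∀ θ ∈ Set.Icc θ₀ (θ₀ + δ),
      ‖∑ n ∈ S m, c n * (n.choose m : ℂ) * Complex.exp (Complex.I * (n * (θ : ℝ)))‖ ≤
        M' * (x ^ m)⁻¹ := by
    intro m θ hθ
    set F : ℕ → ℂ := fun n => c n * (n.choose m : ℂ) * Complex.exp (Complex.I * (n * (θ : ℝ)))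
    have hFn : ∀ n, ‖F n‖ = ‖c n‖ * (n.choose m : ℝ) := by
      intro n
      have : ‖Complex.exp (Complex.I * (n * (θ : ℝ)))‖ = 1 := by
        have := Complex.norm_exp_I_mul_ofReal (n * θ)
        push_cast at this; exact this
      simp only [F]
      rw [norm_mul, norm_mul, this, mul_one, Complex.norm_natCast]
    have hFs : Summable F := Summable.of_norm (by
      simp_rw [hFn]; exact summable_norm_mul_choose c hc m)
    have hsplit := hFs.sum_add_tsum_compl (s := S m)
    have hgeo : HasSum (fun n => C * t ^ n * (x ^ m)⁻¹) (C * (1 - t)⁻¹ * (x ^ m)⁻¹) :=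
      ((hasSum_geometric_of_lt_one ht0 ht1).mul_left C).mul_right _
    have hrest : ‖∑' n : ↑((S m : Set ℕ)ᶜ), F n‖ ≤ C * (1 - t)⁻¹ * (x ^ m)⁻¹ := by
      rw [tsum_subtype ((S m : Set ℕ)ᶜ) F]
      refine tsum_of_norm_bounded hgeo fun n => ?_
      by_cases hn : n ∈ S m
      · rw [Set.indicator_of_notMem (by simpa using hn), norm_zero]; positivity
      · rw [Set.indicator_of_mem (by simpa using hn), hFn]
        exact norm_mul_choose_le_of_not_mem c T hc hq hcT hx hx2 n m (by rwa [← hSmem])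
    have hmain := h m θ hθ
    have hpow : M * (x₁ ^ m)⁻¹ ≤ M * (x ^ m)⁻¹ := by gcongr
    have : ∑ n ∈ S m, F n = ∑' n, F n - ∑' n : ↑((S m : Set ℕ)ᶜ), F n := by
      rw [← hsplit]; ring
    change ‖∑ n ∈ S m, F n‖ ≤ _
    rw [this]
    refine (norm_sub_le _ _).trans ?_
    rw [hM', add_mul]
    exact add_le_add (hmain.trans hpow) hrest
  -- This `ε` makes the Turán factor at most a constant times `x ^ (m / 2)`.
  set ε := δ * Real.log x / (128 * Real.pi) with hε
  have hlog : 0 < Real.log x := Real.log_pos hx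
  have hεpos : 0 < ε := by positivity
  set v := Real.exp (Real.log x / 8) with hv
  have hv1 : 1 < v := Real.one_lt_exp_iff.2 (by positivity)
  have hv8 : v ^ 8 = x := by
    rw [hv, ← Real.exp_nat_mul]; push_cast
    rw [mul_div_cancel₀ _ (by norm_num), Real.exp_log hx0]
  set E := Real.exp (4 * Real.pi / δ) with hE
  have hbk : ∀ᶠ m : ℕ in atTop, ∀ k ∈ S m,
      ‖c k‖ * (k.choose m : ℝ) ≤ M' * E * (v ^ (4 * m))⁻¹ := by
    have h32 : Tendsto (fun m : ℕ => 32 * m) atTop atTop :=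
      tendsto_id.const_mul_atTop' (by norm_num)
    filter_upwards [h32.eventually (hT ε hεpos)] with m hm k hk
    have hcard : ((S m).card : ℝ) ≤ 1 + ε * (32 * m) := by
      have h1 : (S m).card ≤ 1 + (T ∩ Set.Icc 1 (32 * m)).ncard := by
        have hfin : (T ∩ Set.Icc 1 (32 * m)).Finite := (Set.finite_Icc _ _).inter_of_right _
        have hsub : S m ⊆ insert 0 hfin.toFinset := by
          intro n hn
          rw [hSmem] at hn
          simp only [Finset.mem_insert, Set.Finite.mem_toFinset, Set.mem_inter_iff, Set.mem_Icc]
          rcases Nat.eq_zero_or_pos n with h0 | h0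
          · exact Or.inl h0
          · exact Or.inr ⟨hn.2, h0, hn.1.le⟩
        have := (Finset.card_le_card hsub).trans (Finset.card_insert_le _ _)
        rw [Set.ncard_eq_toFinset_card _ hfin]
        omega
      have h2 : ((S m).card : ℝ) ≤ 1 + ((T ∩ Set.Icc 1 (32 * m)).ncard : ℝ) := by
        exact_mod_cast h1
      push_cast at hm
      linarith
    have htur := turan k θ₀ δ hδ (S m) hk (fun n => c n * (n.choose m : ℂ)) _ (harc m)
    rw [norm_mul, Complex.norm_natCast] at htur
    have hexp : Real.exp (2 * Real.pi / δ * ((S m).card + 1)) ≤ E * v ^ (4 * m) := by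
      have e1 : v ^ (4 * m) = Real.exp (m * Real.log x / 2) := by
        rw [hv, ← Real.exp_nat_mul]; push_cast; congr 1; ring
      rw [e1, hE, ← Real.exp_add]
      refine Real.exp_le_exp.2 ?_
      calc 2 * Real.pi / δ * ((S m).card + 1) ≤ 2 * Real.pi / δ * (1 + ε * (32 * m) + 1) := by
            gcongr
        _ = _ := by rw [hε]; field_simp; ring
    refine htur.trans ((mul_le_mul_of_nonneg_left hexp (by positivity)).trans (le_of_eq ?_))
    have e2 : x ^ m = v ^ (4 * m) * v ^ (4 * m) := by
      rw [← hv8, ← pow_mul, ← pow_add]; congr 1; ring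
    rw [e2]
    have : v ^ (4 * m) ≠ 0 := by positivity
    field_simp
  refine ⟨min (2 * v) q, ?_⟩
  have hy : 2 < min (2 * v) q := lt_min (by linarith) hq
  suffices hev : ∀ᶠ k : ℕ in atTop, ‖c k‖ * (min (2 * v) q) ^ k ≤
      max C ((1 + (v - 1)⁻¹) * (M' * E * v ^ 2)) by
    obtain ⟨C', hC'⟩ := exists_forall_le_of_eventually hev
    exact ⟨C', hy, hC'⟩
  have hhalf : Tendsto (fun k : ℕ => k / 2) atTop atTop :=
    Nat.tendsto_div_const_atTop (by norm_num)
  filter_upwards [hhalf.eventually hbk, eventually_ge_atTop 2] with k hk hk2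
  by_cases hkT : k ∈ T
  · refine le_trans ?_ (le_max_right _ _)
    have h1 := hk k ((hSmem _ _).2 ⟨by omega, hkT⟩)
    have hberr : (k : ℝ) + 1 ≤ (1 + (v - 1)⁻¹) * v ^ k := by
      have hb := one_add_mul_le_pow (a := v - 1) (by linarith) k
      rw [show 1 + (v - 1) = v by ring] at hb
      have hv0 : 0 < v - 1 := by linarith
      have e1 : (k : ℝ) ≤ (v - 1)⁻¹ * v ^ k := by
        rw [inv_mul_eq_div, le_div_iff₀ hv0]; linarith
      have e2 : 1 ≤ v ^ k := one_le_pow₀ hv1.le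
      linarith
    have hvpow : v ^ (2 * k) ≤ v ^ 2 * v ^ (4 * (k / 2)) := by
      rw [← pow_add]
      exact pow_le_pow_right₀ hv1.le (by omega)
    calc ‖c k‖ * (min (2 * v) q) ^ k ≤ ‖c k‖ * (2 * v) ^ k := by
          gcongr; exact min_le_left _ _
      _ = ‖c k‖ * 2 ^ k * v ^ k := by rw [mul_pow]; ring
      _ ≤ ‖c k‖ * ((k + 1) * (k.choose (k / 2) : ℝ)) * v ^ k := by
          gcongr; exact two_pow_le_mul_choose_half k
      _ = (k + 1) * (‖c k‖ * (k.choose (k / 2) : ℝ)) * v ^ k := by ring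
      _ ≤ ((1 + (v - 1)⁻¹) * v ^ k) * (M' * E * (v ^ (4 * (k / 2)))⁻¹) * v ^ k := by gcongr
      _ = (1 + (v - 1)⁻¹) * (M' * E) * (v ^ (2 * k) * (v ^ (4 * (k / 2)))⁻¹) := by
          rw [two_mul, pow_add]; ring
      _ ≤ (1 + (v - 1)⁻¹) * (M' * E) * v ^ 2 := by
          have : 0 ≤ (v - 1)⁻¹ := inv_nonneg.2 (by linarith)
          refine mul_le_mul_of_nonneg_left ?_ (by positivity)
          rw [← div_eq_mul_inv, div_le_iff₀ (by positivity)]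
          exact hvpow
      _ = _ := by ring
  · refine le_trans ?_ (le_max_left _ _)
    refine le_trans ?_ (hcT k hkT)
    gcongr
    exact min_le_right _ _

lemma eventually_ncard_le_of_not_hasPosUpperDensity {T : Set ℕ} (hT : ¬ HasPosUpperDensity T)
    (ε : ℝ) (hε : 0 < ε) : ∀ᶠ n : ℕ in atTop, ((T ∩ Set.Icc 1 n).ncard : ℝ) ≤ ε * n := by
  unfold HasPosUpperDensity upperDensity at hT
  push Not at hT
  have hbd : Filter.IsBoundedUnder (· ≤ ·) atTop
      (fun n : ℕ => ((T ∩ Set.Icc 1 n).ncard : ℝ) / n) := by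
    refine ⟨1, eventually_map.2 (Eventually.of_forall fun n => ?_)⟩
    refine div_le_one_of_le₀ ?_ (Nat.cast_nonneg n)
    have := Set.ncard_le_ncard (Set.inter_subset_right (s := T)) (Set.finite_Icc 1 n)
    rw [← Finset.coe_Icc, Set.ncard_coe_finset, Nat.card_Icc, Nat.add_sub_cancel] at this
    exact_mod_cast this
  filter_upwards [eventually_lt_of_limsup_lt (lt_of_le_of_lt hT hε) hbd, eventually_gt_atTop 0]
    with n hn hn0
  have : (0 : ℝ) < n := by exact_mod_cast hn0
  rw [div_lt_iff₀ this] at hn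
  exact hn.le

lemma exists_bound_of_lt_seriesRadius {a : ℕ → ℂ} {r s : ℝ}
    (hrad : seriesRadius a = ENNReal.ofReal r) (hs0 : 0 ≤ s) (hs : s < r) :
    ∃ C, ∀ n, ‖a n‖ * s ^ n ≤ C := by
  have h1 : ENNReal.ofReal s < seriesRadius a := by
    rw [hrad]; exact (ENNReal.ofReal_lt_ofReal_iff (hs0.trans_lt hs)).2 hs
  unfold seriesRadius at h1
  simp only [lt_iSup_iff] at h1
  obtain ⟨t, ⟨C, hC⟩, ht⟩ := h1
  have hst : s ≤ t := by
    rw [← ENNReal.ofReal_coe_nnreal] at ht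
    exact (ENNReal.ofReal_le_ofReal_iff t.2).1 ht.le
  exact ⟨C, fun n => le_trans (by gcongr) (hC n)⟩

lemma le_of_seriesRadius_eq {a : ℕ → ℂ} {r s C : ℝ}
    (hrad : seriesRadius a = ENNReal.ofReal r) (hr : 0 ≤ r) (hs0 : 0 ≤ s)
    (hs : ∀ n, ‖a n‖ * s ^ n ≤ C) : s ≤ r := by
  lift s to NNReal using hs0
  have h1 : (s : ENNReal) ≤ seriesRadius a := by
    unfold seriesRadius
    exact le_iSup₂_of_le s ⟨C, hs⟩ le_rfl
  rw [hrad, ← ENNReal.ofReal_coe_nnreal] at h1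
  exact (ENNReal.ofReal_le_ofReal_iff hr).1 h1

/-- **Fabry's gap theorem**, allowing a perturbation of larger radius of convergence: a power
series whose coefficients off a set of zero upper density are `O(p⁻ⁿ)` with `p > r` has the circle
of convergence `|z| = r` as a natural boundary. -/
lemma hasNaturalBoundary_of_sparse {a : ℕ → ℂ} {r p C : ℝ} {T : Set ℕ}
    (hrad : seriesRadius a = ENNReal.ofReal r) (hr : 0 < r) (hT : ¬ HasPosUpperDensity T)
    (hp : r < p) (haT : ∀ n ∉ T, ‖a n‖ * p ^ n ≤ C) : HasNaturalBoundary a r := by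
  rintro ⟨z₀, U, g, hz₀, hU, hzU, hgan, hg⟩
  obtain ⟨C₁, hC₁⟩ := exists_bound_of_lt_seriesRadius hrad (s := 3 / 4 * r) (by positivity)
    (by linarith)
  -- Rescaling by `r / 2` moves the circle of convergence to `|z| = 2`.
  set c : ℕ → ℂ := fun n => a n * ((r / 2 : ℝ) : ℂ) ^ n with hcdef
  have hcn : ∀ (n : ℕ) (s : ℝ), ‖c n‖ * s ^ n = ‖a n‖ * (r / 2 * s) ^ n := by
    intro n s
    rw [hcdef, norm_mul, norm_pow, Complex.norm_real, Real.norm_of_nonneg (by positivity), mul_pow]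
    ring
  have hc : ∀ n, ‖c n‖ * (3 / 2) ^ n ≤ max C₁ C := by
    intro n
    rw [hcn, show r / 2 * (3 / 2) = 3 / 4 * r by ring]
    exact (hC₁ n).trans (le_max_left _ _)
  have hcT : ∀ n ∉ T, ‖c n‖ * (2 * p / r) ^ n ≤ max C₁ C := by
    intro n hn
    rw [hcn, show r / 2 * (2 * p / r) = p by field_simp]
    exact (haT n hn).trans (le_max_right _ _)
  have hmaps : ∀ z : ℂ, z ∈ Metric.ball (0 : ℂ) 2 → ((r / 2 : ℝ) : ℂ) * z ∈ Metric.ball (0 : ℂ) r := by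
    intro z hz
    rw [mem_ball_zero_iff] at hz ⊢
    rw [norm_mul, Complex.norm_real, Real.norm_of_nonneg (by positivity)]
    nlinarith
  have hr2 : ((r / 2 : ℝ) : ℂ) ≠ 0 := by
    exact_mod_cast (by positivity : r / 2 ≠ 0)
  obtain ⟨θ₀, δ, x, M, hδ, hx, harc⟩ := exists_arc_bound c hc (z₀ / ((r / 2 : ℝ) : ℂ))
    ((fun z => ((r / 2 : ℝ) : ℂ) * z) ⁻¹' U) (fun z => g (((r / 2 : ℝ) : ℂ) * z))
    (by
      rw [norm_div, hz₀, Complex.norm_real, Real.norm_of_nonneg (by positivity)]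
      field_simp)
    (hU.preimage (by fun_prop))
    (by rwa [Set.mem_preimage, mul_div_cancel₀ _ hr2])
    (by
      intro z hz
      have hmem : ((r / 2 : ℝ) : ℂ) * z ∈ Metric.ball 0 r ∪ U := by
        rcases hz with hz | hz
        · exact Or.inl (hmaps z hz)
        · exact Or.inr hz
      exact (hgan _ hmem).fun_comp (by fun_prop))
    (by
      intro z hz
      change g _ = _
      rw [hg (hmaps z hz)]
      simp only [hcdef]
      exact tsum_congr fun n => by rw [mul_pow]; ring)
  obtain ⟨y, C', hy, hyC⟩ := exists_coeff_bound c T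
    (fun ε hε => eventually_ncard_le_of_not_hasPosUpperDensity hT ε hε) hc
    (by rw [lt_div_iff₀ hr]; linarith) hcT hδ hx harc
  have := le_of_seriesRadius_eq (s := r / 2 * y) hrad hr.le (by positivity)
    (fun n => by rw [← hcn]; exact hyC n)
  nlinarith

/-- Let `f = ∑ aₙ zⁿ ∈ K[[z]]` over a number field `K` embedded in
`ℂ`, with radius of convergence `r`. (a) If `1 < r < ∞` and `f` does not admit the
circle of radius `r` as a natural boundary, then `h(aₙ) ≥ κ n` on a set of positive
upper density. (b) Likewise if `0 < r < 1` and `f` does not admit the circle of radius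
`r` as a natural boundary. -/
theorem height_growth_when_radius_ne_one
    (K : Type*) [Field K] [NumberField K] (ι : K →+* ℂ) (a : ℕ → K) (r : ℝ)
    (hrad : seriesRadius (fun n => ι (a n)) = ENNReal.ofReal r) :
    ((1 < r → ¬ HasNaturalBoundary (fun n => ι (a n)) r →
      ∃ κ : ℝ, 0 < κ ∧ HasPosUpperDensity {n : ℕ | κ * n ≤ weilHeight K (a n)}) ∧
     (0 < r → r < 1 → ¬ HasNaturalBoundary (fun n => ι (a n)) r →
      ∃ κ' : ℝ, 0 < κ' ∧ HasPosUpperDensity {n : ℕ | κ' * n ≤ weilHeight K (a n)})) := by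
  set d : ℝ := ((Module.finrank ℚ K : ℕ) : ℝ) with hd
  have hdpos : 0 < d := by
    have : 0 < Module.finrank ℚ K := Module.finrank_pos
    rw [hd]; exact_mod_cast this
  constructor
  · intro hr hnb
    -- With `s = √r`, a nonzero `aₙ` of height below `κ n` exceeds the bound `C s⁻ⁿ` once `n` is large.
    set s := Real.sqrt r with hs
    have hr0 : 0 < r := by linarith
    have hs1 : 1 < s := by rw [hs]; exact Real.lt_sqrt_of_sq_lt (by simpa using hr)
    have hss : s * s = r := Real.mul_self_sqrt hr0.le
    have hsr : s < r := by nlinarith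
    have hlog : 0 < Real.log s := Real.log_pos hs1
    refine ⟨Real.log s / (2 * d ^ 2), by positivity, ?_⟩
    by_contra hT
    apply hnb
    obtain ⟨C₀, hC₀⟩ := exists_bound_of_lt_seriesRadius hrad (by positivity) hsr
    set w := Real.exp (Real.log s / 2) with hw
    have hw1 : 1 < w := Real.one_lt_exp_iff.2 (by positivity)
    have hww : w * w = s := by
      rw [hw, ← Real.exp_add, add_halves, Real.exp_log (by linarith)]
    set T := {n : ℕ | Real.log s / (2 * d ^ 2) * n ≤ weilHeight K (a n)} with hTdef
    classical
    have hev : ∀ᶠ n : ℕ in atTop, (if n ∈ T then 0 else ‖ι (a n)‖ * (r + 1) ^ n) ≤ (0 : ℝ) := by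
      filter_upwards [(tendsto_pow_atTop_atTop_of_one_lt hw1).eventually_gt_atTop C₀] with n hn
      split_ifs with hnT
      · exact le_rfl
      · by_cases h0 : a n = 0
        · simp [h0]
        · exfalso
          have h1 := exp_neg_height_le_norm_embedding K ι (a n) h0
          rw [← hd] at h1
          simp only [hTdef, Set.mem_ofPred_eq, not_le] at hnT
          have h2 : d ^ 2 * weilHeight K (a n) ≤ n * (Real.log s / 2) := by
            calc d ^ 2 * weilHeight K (a n) ≤ d ^ 2 * (Real.log s / (2 * d ^ 2) * n) := by gcongr
              _ = _ := by field_simp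
          have h3 : (w ^ n)⁻¹ ≤ ‖ι (a n)‖ := by
            refine le_trans ?_ h1
            rw [hw, ← Real.exp_nat_mul, ← Real.exp_neg]
            exact Real.exp_le_exp.2 (by linarith)
          have h4 := hC₀ n
          rw [← hww, mul_pow] at h4
          have hwn : 0 < w ^ n := by positivity
          have h5 : w ^ n ≤ ‖ι (a n)‖ * (w ^ n * w ^ n) := by
            calc w ^ n = (w ^ n)⁻¹ * (w ^ n * w ^ n) := by field_simp
              _ ≤ _ := by gcongr
          linarith
    obtain ⟨C, hC⟩ := exists_forall_le_of_eventually hev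
    refine hasNaturalBoundary_of_sparse (T := T) (p := r + 1) (C := C) hrad hr0 hT (by linarith) ?_
    intro n hn
    have := hC n
    rwa [if_neg hn] at this
  · intro hr0 hr1 hnb
    have hlog : Real.log r < 0 := Real.log_neg hr0 hr1
    refine ⟨-Real.log r / (2 * d), div_pos (by linarith) (by positivity), ?_⟩
    by_contra hT
    apply hnb
    -- Off the exceptional set, `|aₙ| ≤ r^(-n/2)`, so that part of the series has radius `≥ √r > r`.
    refine hasNaturalBoundary_of_sparse (p := Real.exp (Real.log r / 2)) (C := 1) hrad hr0 hT ?_ ?_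
    · calc r = Real.exp (Real.log r) := (Real.exp_log hr0).symm
        _ < _ := Real.exp_lt_exp.2 (by linarith)
    · intro n hn
      simp only [Set.mem_ofPred_eq, not_le] at hn
      have h1 := norm_embedding_le_exp_height K ι (a n)
      rw [← hd] at h1
      have h2 : d * weilHeight K (a n) ≤ n * (-Real.log r / 2) := by
        calc d * weilHeight K (a n) ≤ d * (-Real.log r / (2 * d) * n) := by gcongr
          _ = _ := by field_simp
      calc ‖ι (a n)‖ * Real.exp (Real.log r / 2) ^ n
          ≤ Real.exp (n * (-Real.log r / 2)) * Real.exp (Real.log r / 2) ^ n := by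
            gcongr
            exact h1.trans (Real.exp_le_exp.2 h2)
        _ = 1 := by
            rw [← Real.exp_nat_mul, ← Real.exp_add, ← Real.exp_zero]
            congr 1; ring
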